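/- Let d ≥ 1, W ∈ ℝ^d, and σ > 0, and set σ_P² = σ² + ‖W‖²/d. Then the Kullback–Leibler divergence between the product Gaussian measure Q = ⨂ᵢ N(Wᵢ, σ²) on ℝ^d and the product Gaussian measure P = ⨂ᵢ N(0, σ_P²) equals (d/2)·log(1 + ‖W‖²/(d σ²)); in particular KL(Q ‖ P) ≤ (d/2)·log(1 + ‖W‖²/(d σ²)). -/

import Mathlib

/-!
The density of a product of probability measures `(μ i).withDensity (f i)` with respect to the
product of the `μ i` is `x ↦ ∏ i, f i (x i)` (`pi_withDensity_prod`), so the log-likelihood ratio of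
`Q` and `P` is a sum of one-dimensional ones. The coordinate with mean `m` contributes
`(1/2) log (w / v) - 1/2 + (v + m²) / (2 w)` to the divergence, where `v = σ²` and `w = σ_P²`,
because the second moment of `N(m, v)` is `v + m²` (`integral_log_gaussianRatio`). Summing over
the coordinates gives `(d/2) log (w / v) - d/2 + (d v + ‖W‖²) / (2 w)`, and the choice of `w` makes
`d v + ‖W‖² = d w`, so that the last two terms cancel.
-/

open MeasureTheory ProbabilityTheory

/-- The Kullback–Leibler divergence `∫ log(dQ/dP) dQ`. -/
noncomputable def klDivergence {α : Type*} [MeasurableSpace α] (Q P : Measure α) : ℝ :=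
  ∫ x, Real.log (Q.rnDeriv P x).toReal ∂Q

open scoped NNReal ENNReal

lemma pi_withDensity_prod {ι : Type*} [Fintype ι] {Ω : ι → Type*} [∀ i, MeasurableSpace (Ω i)]
    (μ : ∀ i, Measure (Ω i)) [∀ i, IsProbabilityMeasure (μ i)]
    (f : ∀ i, Ω i → ℝ≥0∞) (hf : ∀ i, Measurable (f i))
    [∀ i, SigmaFinite ((μ i).withDensity (f i))] :
    Measure.pi (fun i => (μ i).withDensity (f i))
      = (Measure.pi μ).withDensity (fun x => ∏ i, f i (x i)) := by
  refine Measure.pi_eq (μ := fun i => (μ i).withDensity (f i)) fun s hs => ?_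
  have hg : ∀ i, Measurable ((s i).indicator (f i)) := fun i => (hf i).indicator (hs i)
  rw [withDensity_apply _ (MeasurableSet.univ_pi hs),
    ← lintegral_indicator (MeasurableSet.univ_pi hs)]
  have h1 : ∀ x : ∀ i, Ω i, (Set.univ.pi s).indicator (fun x => ∏ i, f i (x i)) x
      = ∏ i, (s i).indicator (f i) (x i) := by
    intro x
    by_cases hx : x ∈ Set.univ.pi s
    · rw [Set.indicator_of_mem hx]
      exact Finset.prod_congr rfl fun i _ => (Set.indicator_of_mem (hx i (Set.mem_univ i)) _).symm
    · rw [Set.indicator_of_notMem hx]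
      simp only [Set.mem_univ_pi, not_forall] at hx
      obtain ⟨i, hi⟩ := hx
      exact (Finset.prod_eq_zero (Finset.mem_univ i) (Set.indicator_of_notMem hi _)).symm
  rw [lintegral_congr h1, lintegral_prod_eq_prod_lintegral_of_indepFun Finset.univ
    (fun i (x : ∀ i, Ω i) => (s i).indicator (f i) (x i))
    (iIndepFun_pi fun i => (hg i).aemeasurable) (fun i => (hg i).comp (measurable_pi_apply i))]
  refine Finset.prod_congr rfl fun i _ => ?_
  rw [withDensity_apply _ (hs i), ← lintegral_indicator (hs i)]
  exact (measurePreserving_eval μ i).lintegral_comp (hg i)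

/-- The density of `N(m, v)` with respect to `N(0, w)`, for nonzero `v` and `w`. -/
noncomputable def gaussianRatio (m : ℝ) (v w : ℝ≥0) (x : ℝ) : ℝ :=
  gaussianPDFReal m v x / gaussianPDFReal 0 w x

lemma measurable_gaussianRatio (m : ℝ) (v w : ℝ≥0) : Measurable (gaussianRatio m v w) :=
  (measurable_gaussianPDFReal m v).div (measurable_gaussianPDFReal 0 w)

lemma gaussianRatio_pos (m : ℝ) {v w : ℝ≥0} (hv : v ≠ 0) (hw : w ≠ 0) (x : ℝ) :
    0 < gaussianRatio m v w x :=
  div_pos (gaussianPDFReal_pos _ _ _ hv) (gaussianPDFReal_pos _ _ _ hw)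

lemma gaussianReal_eq_withDensity_gaussianRatio (m : ℝ) {v w : ℝ≥0} (hv : v ≠ 0) (hw : w ≠ 0) :
    gaussianReal m v
      = (gaussianReal 0 w).withDensity (fun x => ENNReal.ofReal (gaussianRatio m v w x)) := by
  rw [gaussianReal_of_var_ne_zero _ hv, gaussianReal_of_var_ne_zero _ hw,
    ← withDensity_mul _ (measurable_gaussianPDF 0 w)
      (measurable_gaussianRatio m v w).ennreal_ofReal]
  congr 1
  ext x
  have hx := gaussianPDFReal_pos 0 w x hw
  rw [Pi.mul_apply, gaussianPDF, gaussianPDF, ← ENNReal.ofReal_mul hx.le, gaussianRatio,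
    mul_div_cancel₀ _ hx.ne']

lemma log_gaussianRatio (m : ℝ) {v w : ℝ≥0} (hv : v ≠ 0) (hw : w ≠ 0) (x : ℝ) :
    Real.log (gaussianRatio m v w x)
      = 1 / 2 * Real.log (w / v) - (x - m) ^ 2 / (2 * v) + x ^ 2 / (2 * w) := by
  have hv' : (0 : ℝ) < v := by positivity
  have hw' : (0 : ℝ) < w := by positivity
  have key : ∀ (m : ℝ) (u : ℝ≥0), (0 : ℝ) < u → Real.log (gaussianPDFReal m u x)
      = -(1 / 2 * (Real.log (2 * Real.pi) + Real.log u)) - (x - m) ^ 2 / (2 * u) := by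
    intro m u hu
    rw [gaussianPDFReal, Real.log_mul (by positivity) (by positivity), Real.log_exp, Real.log_inv,
      Real.log_sqrt (by positivity), Real.log_mul (by positivity) (by positivity)]
    ring
  rw [gaussianRatio, Real.log_div (gaussianPDFReal_pos _ _ _ hv).ne'
    (gaussianPDFReal_pos _ _ _ hw).ne', key _ _ hv', key _ _ hw',
    Real.log_div hw'.ne' hv'.ne']
  ring

lemma integrable_sq_sub_gaussianReal (m c : ℝ) (v : ℝ≥0) :
    Integrable (fun x => (x - c) ^ 2) (gaussianReal m v) :=
  ((memLp_id_gaussianReal 2).sub (memLp_const c)).integrable_sq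

lemma integral_sq_sub_mean_gaussianReal (m : ℝ) (v : ℝ≥0) :
    ∫ x, (x - m) ^ 2 ∂gaussianReal m v = v := by
  have h := variance_fun_id_gaussianReal (μ := m) (v := v)
  rw [variance_eq_integral (by fun_prop)] at h
  simpa using h

lemma integral_sq_gaussianReal (m : ℝ) (v : ℝ≥0) :
    ∫ x, x ^ 2 ∂gaussianReal m v = v + m ^ 2 := by
  have h := variance_eq_sub (memLp_id_gaussianReal (μ := m) (v := v) 2)
  rw [variance_id_gaussianReal] at h
  simp only [Pi.pow_apply, id_eq, integral_id_gaussianReal] at h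
  linarith

lemma integrable_log_gaussianRatio (m : ℝ) {v w : ℝ≥0} (hv : v ≠ 0) (hw : w ≠ 0) :
    Integrable (fun x => Real.log (gaussianRatio m v w x)) (gaussianReal m v) := by
  simp_rw [log_gaussianRatio m hv hw]
  refine ((integrable_const _).sub ((integrable_sq_sub_gaussianReal m m v).div_const _)).add ?_
  simpa using (integrable_sq_sub_gaussianReal m 0 v).div_const (2 * (w : ℝ))

lemma integral_log_gaussianRatio (m : ℝ) {v w : ℝ≥0} (hv : v ≠ 0) (hw : w ≠ 0) :
    ∫ x, Real.log (gaussianRatio m v w x) ∂gaussianReal m v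
      = 1 / 2 * Real.log (w / v) - 1 / 2 + (v + m ^ 2) / (2 * w) := by
  have hv' : (v : ℝ) ≠ 0 := by exact_mod_cast hv
  have h1 := (integrable_sq_sub_gaussianReal m m v).div_const (2 * (v : ℝ))
  have h2 : Integrable (fun x : ℝ => x ^ 2 / (2 * (w : ℝ))) (gaussianReal m v) := by
    simpa using (integrable_sq_sub_gaussianReal m 0 v).div_const (2 * (w : ℝ))
  simp_rw [log_gaussianRatio m hv hw]
  have h0 : Integrable (fun x : ℝ => 1 / 2 * Real.log (w / v) - (x - m) ^ 2 / (2 * (v : ℝ)))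
      (gaussianReal m v) := (integrable_const _).sub h1
  rw [integral_add h0 h2, integral_sub (integrable_const _) h1,
    integral_div, integral_div, integral_sq_sub_mean_gaussianReal, integral_sq_gaussianReal]
  simp only [integral_const, probReal_univ, one_smul]
  field_simp

lemma klDivergence_pi_gaussianReal {ι : Type*} [Fintype ι] (m : ι → ℝ) {v w : ℝ≥0} (hv : v ≠ 0)
    (hw : w ≠ 0) :
    klDivergence (Measure.pi fun i => gaussianReal (m i) v)
        (Measure.pi fun _ : ι => gaussianReal 0 w)
      = ∑ i, (1 / 2 * Real.log (w / v) - 1 / 2 + (v + m i ^ 2) / (2 * w)) := by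
  set Q := Measure.pi fun i => gaussianReal (m i) v with hQ
  set P := Measure.pi fun _ : ι => gaussianReal 0 w with hP
  have hr := fun i => gaussianReal_eq_withDensity_gaussianRatio (m i) hv hw
  have hmeas : ∀ i, Measurable fun x => ENNReal.ofReal (gaussianRatio (m i) v w x) :=
    fun i => (measurable_gaussianRatio (m i) v w).ennreal_ofReal
  have hQP : Q = P.withDensity fun x => ∏ i, ENNReal.ofReal (gaussianRatio (m i) v w (x i)) := by
    have : ∀ i, SigmaFinite ((gaussianReal 0 w).withDensity
        fun x => ENNReal.ofReal (gaussianRatio (m i) v w x)) := fun i => by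
      rw [← hr i]; infer_instance
    rw [hP, ← pi_withDensity_prod _ _ hmeas, hQ]
    congr 1
    exact funext hr
  have hac : Q ≪ P := by
    rw [hQP]
    exact withDensity_absolutelyContinuous _ _
  have hrn : Q.rnDeriv P =ᵐ[Q] fun x => ∏ i, ENNReal.ofReal (gaussianRatio (m i) v w (x i)) := by
    refine hac.ae_eq ?_
    rw [hQP]
    exact Measure.rnDeriv_withDensity _
      (Finset.measurable_prod _ fun i _ => (hmeas i).comp (measurable_pi_apply i))
  have hlog : (fun x => Real.log (Q.rnDeriv P x).toReal) =ᵐ[Q]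
      fun x => ∑ i, Real.log (gaussianRatio (m i) v w (x i)) := by
    filter_upwards [hrn] with x hx
    rw [hx, ENNReal.toReal_prod, ← Real.log_prod fun i _ => (gaussianRatio_pos _ hv hw _).ne']
    congr 1
    exact Finset.prod_congr rfl fun i _ =>
      ENNReal.toReal_ofReal (gaussianRatio_pos _ hv hw _).le
  have hint := fun i => integrable_log_gaussianRatio (m i) hv hw
  rw [klDivergence, integral_congr_ae hlog, integral_finsetSum _ fun i _ =>
    integrable_comp_eval (μ := fun i => gaussianReal (m i) v) (hint i)]
  refine Finset.sum_congr rfl fun i _ => ?_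
  rw [integral_comp_eval (μ := fun i => gaussianReal (m i) v)
    (hint i).aestronglyMeasurable, integral_log_gaussianRatio _ hv hw]

/-- **KL divergence between the PAC-Bayes posterior and prior.**
For `Q = ⨂ᵢ N(Wᵢ, σ²)` and `P = ⨂ᵢ N(0, σ_P²)` with `σ_P² = σ² + ‖W‖²/d`, the
Kullback–Leibler divergence equals `(d/2)·log(1 + ‖W‖²/(d σ²))`, and in particular
it is bounded by that quantity. -/
theorem klDiv_gaussian_posterior_prior
    (d : ℕ) (hd : 1 ≤ d) (W : EuclideanSpace ℝ (Fin d)) (σ : ℝ) (hσ : 0 < σ) :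
    klDivergence
        (Measure.pi fun i : Fin d => gaussianReal (W i) ⟨σ ^ 2, sq_nonneg σ⟩)
        (Measure.pi fun _ : Fin d =>
          gaussianReal 0 ⟨σ ^ 2 + ‖W‖ ^ 2 / d, by positivity⟩)
      = (d / 2 : ℝ) * Real.log (1 + ‖W‖ ^ 2 / (d * σ ^ 2)) ∧
    klDivergence
        (Measure.pi fun i : Fin d => gaussianReal (W i) ⟨σ ^ 2, sq_nonneg σ⟩)
        (Measure.pi fun _ : Fin d =>
          gaussianReal 0 ⟨σ ^ 2 + ‖W‖ ^ 2 / d, by positivity⟩)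
      ≤ (d / 2 : ℝ) * Real.log (1 + ‖W‖ ^ 2 / (d * σ ^ 2)) := by
  have hd' : (0 : ℝ) < d := by exact_mod_cast hd
  have hw0 : 0 < σ ^ 2 + ‖W‖ ^ 2 / d := by positivity
  refine (fun h => ⟨h, h.le⟩) ?_
  have hv : (⟨σ ^ 2, sq_nonneg σ⟩ : ℝ≥0) ≠ 0 :=
    fun h => (pow_pos hσ 2).ne' (congrArg NNReal.toReal h)
  have hw : (⟨σ ^ 2 + ‖W‖ ^ 2 / d, hw0.le⟩ : ℝ≥0) ≠ 0 :=
    fun h => hw0.ne' (congrArg NNReal.toReal h)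
  refine (klDivergence_pi_gaussianReal (fun i => W i) hv hw).trans ?_
  change ∑ i, (1 / 2 * Real.log ((σ ^ 2 + ‖W‖ ^ 2 / d) / σ ^ 2) - 1 / 2
    + (σ ^ 2 + W i ^ 2) / (2 * (σ ^ 2 + ‖W‖ ^ 2 / d))) = _
  have hW : ∑ i, W i ^ 2 = ‖W‖ ^ 2 := by
    rw [EuclideanSpace.norm_sq_eq]
    simp
  have hratio : (σ ^ 2 + ‖W‖ ^ 2 / d) / σ ^ 2 = 1 + ‖W‖ ^ 2 / (d * σ ^ 2) := by
    field_simp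
  rw [hratio, Finset.sum_add_distrib, ← Finset.sum_div, Finset.sum_add_distrib, hW]
  simp only [Finset.sum_const, Finset.card_univ, Fintype.card_fin, nsmul_eq_mul]
  -- The choice of prior variance: `d σ² + ‖W‖² = d σ_P²`.
  have hlast : ((d : ℝ) * σ ^ 2 + ‖W‖ ^ 2) / (2 * (σ ^ 2 + ‖W‖ ^ 2 / d)) = d / 2 := by
    rw [div_eq_div_iff (by positivity) (by norm_num)]
    field_simp
  rw [hlast]
  ring
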